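/- Assume 0 < γ ≤ 1 (and γ < p), let u be a local minimizer of J on Ω, and let Ω' ⊆ Ω with dist(Ω', ∂Ω) > 0. Assume the growth property: there exist ρ₀ > 0 and C₂ > 0 such that |u(x)| ≤ C₂ · dist(x, Γ_0(u))^{1+τ} for every x ∈ Ω with dist(x, Γ_0(u)) < ρ₀. Then there exists κ ∈ (0,1), depending only on N, p, γ, λ₊, λ₋ and C₂, such that for every z ∈ Γ_0(u) ∩ Ω' and every 0 < r < min(ρ₀, dist(Ω', ∂Ω)) there exists y ∈ B_r(z) with B_{κr}(y) ⊆ B_r(z) \ Γ_0(u); that is, Γ_0(u) is locally porous in Ω with porosity constant κ. -/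

import Mathlib

open MeasureTheory Metric Set
open scoped InnerProductSpace

/-- The Alt–Phillips potential `F_γ(t) = λ₊ (t₊)^γ + λ₋ (t₋)^γ`. -/
noncomputable def Fgam (γ lp lm : ℝ) (t : ℝ) : ℝ :=
  lp * (max t 0) ^ γ + lm * (max (-t) 0) ^ γ

/-- `u` is a `C¹(Ω)` function with `∫_Ω ‖∇u‖^p < ∞` which is a local minimizer of the
functional with density `‖∇v‖^p/p + F(v)`, with respect to Lipschitz competitors on
balls compactly contained in `Ω` agreeing with `u` on the boundary sphere. -/
def APLocMin (N : ℕ) (p : ℝ) (F : ℝ → ℝ) (Ω : Set (EuclideanSpace ℝ (Fin N)))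
    (u : EuclideanSpace ℝ (Fin N) → ℝ) : Prop :=
  (∀ x ∈ Ω, DifferentiableAt ℝ u x) ∧
  ContinuousOn (fun x => gradient u x) Ω ∧
  IntegrableOn (fun x => ‖gradient u x‖ ^ p) Ω volume ∧
  ∀ (z : EuclideanSpace ℝ (Fin N)) (r : ℝ), 0 < r → closure (Metric.ball z r) ⊆ Ω →
    ∀ (v : EuclideanSpace ℝ (Fin N) → ℝ) (K : NNReal),
      LipschitzOnWith K v (closure (Metric.ball z r)) →
      Set.EqOn v u (Metric.sphere z r) →
      (∫ x in Metric.ball z r, (‖gradient u x‖ ^ p / p + F (u x))) ≤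
        ∫ x in Metric.ball z r, (‖gradient v x‖ ^ p / p + F (v x))

/-- The free boundary `Γ(u) = (∂{u>0} ∪ ∂{u<0}) ∩ Ω`. -/
def apFB (N : ℕ) (Ω : Set (EuclideanSpace ℝ (Fin N)))
    (u : EuclideanSpace ℝ (Fin N) → ℝ) : Set (EuclideanSpace ℝ (Fin N)) :=
  (frontier {x ∈ Ω | 0 < u x} ∪ frontier {x ∈ Ω | u x < 0}) ∩ Ω

/-- The zero-gradient part of the free boundary `Γ₀(u) = Γ(u) ∩ {∇u = 0}`. -/
def apFB0 (N : ℕ) (Ω : Set (EuclideanSpace ℝ (Fin N)))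
    (u : EuclideanSpace ℝ (Fin N) → ℝ) : Set (EuclideanSpace ℝ (Fin N)) :=
  apFB N Ω u ∩ {x | gradient u x = 0}

/-!
At a free boundary point `z` a minimizer is nondegenerate: `|u|` exceeds `c₀ r ^ (1 + τ)` somewhere
in `B_r(z)`. Otherwise, after a change of sign, some `x₀` near `z` has `u x₀ > 0` while `u ≤ M` on
`B_R(x₀)`, with `R = r / 2` and `M` a small multiple of `R ^ (1 + τ)`. Let `w` be the multiple of
`|x - x₀| ^ q`, `1/p + 1/q = 1`, equal to `M` on `∂B_R(x₀)`. Its `p`-Laplacian is a constant,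
smaller than the slope `λ₊ γ M ^ (γ - 1)` which, by concavity of `t ^ γ`, bounds the difference
quotients of `F_γ` on `[0, M]` from below. So replacing `u` by `min u w` strictly lowers the energy
unless `u ≤ w`; but `w` vanishes at `x₀`. On the other hand, the growth property bounds `|u y|` by
`C₂ dist(y, Γ₀) ^ (1 + τ)`, so the point `y` of `B_{r/2}(z)` given by nondegeneracy has distance
at least a fixed multiple of `r` from `Γ₀`.
-/

section Analysis

open Filter Topology

section ExtensionByZero

lemma inter_frontier_nonempty_of_isPreconnected {X : Type*} [TopologicalSpace X] {s t : Set X}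
    (ht : IsPreconnected t) {x y : X} (hxt : x ∈ t) (hxs : x ∈ s) (hyt : y ∈ t) (hys : y ∉ s) :
    (t ∩ frontier s).Nonempty := by
  by_contra hempty
  have hdisj : ∀ a ∈ t, a ∉ frontier s := fun a hat ha => hempty ⟨a, hat, ha⟩
  have hcover : t ⊆ interior s ∪ (closure s)ᶜ := fun a hat => by
    by_contra ha
    simp only [mem_union, mem_compl_iff, not_or, not_not] at ha
    exact hdisj a hat ⟨ha.2, ha.1⟩
  have hx : x ∈ interior s :=
    (hcover hxt).resolve_right fun h => h (subset_closure hxs)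
  have hy : y ∈ (closure s)ᶜ :=
    (hcover hyt).resolve_left fun h => hys (interior_subset h)
  obtain ⟨a, -, ha, ha'⟩ :=
    ht _ _ isOpen_interior isClosed_closure.isOpen_compl hcover ⟨x, hxt, hx⟩ ⟨y, hyt, hy⟩
  exact ha' (subset_closure (interior_subset ha))

variable {E : Type*} [NormedAddCommGroup E] [NormedSpace ℝ E]

lemma ball_subset_of_le_infDist_frontier {Ω : Set E} {z : E} {r : ℝ} (hz : z ∈ Ω)
    (hr : r ≤ infDist z (frontier Ω)) : ball z r ⊆ Ω := by
  intro y hy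
  by_contra hyΩ
  have hzr : z ∈ ball z r := mem_ball_self (pos_of_mem_ball hy)
  obtain ⟨a, har, ha⟩ := inter_frontier_nonempty_of_isPreconnected
    (convex_ball z r).isPreconnected hzr hz hy hyΩ
  exact ((mem_ball'.1 har).trans_le hr).not_ge (infDist_le_dist_of_mem ha)

lemma lipschitzWith_indicator_of_eq_zero_on_frontier {s : Set E} (hs : IsClosed s) {f : E → ℝ}
    {K : NNReal} (hf : LipschitzOnWith K f s) (hf0 : ∀ x ∈ frontier s, f x = 0) :
    LipschitzWith K (s.indicator f) := by
  have abs_le_of_exit : ∀ x ∈ s, ∀ y ∉ s, |f x| ≤ K * dist x y := fun x hx y hy => by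
    obtain ⟨a, ha, has⟩ := inter_frontier_nonempty_of_isPreconnected
      (convex_segment x y).isPreconnected (left_mem_segment ℝ x y) hx
      (right_mem_segment ℝ x y) hy
    calc |f x| = dist (f x) (f a) := by rw [hf0 a has, Real.dist_0_eq_abs]
      _ ≤ K * dist x a := hf.dist_le_mul x hx a (hs.frontier_subset has)
      _ ≤ K * dist x y := by
        gcongr
        linarith [dist_add_dist_of_mem_segment ha, dist_nonneg (x := a) (y := y)]
  refine LipschitzWith.of_dist_le_mul fun x y => ?_
  by_cases hx : x ∈ s <;> by_cases hy : y ∈ s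
  · rw [indicator_of_mem hx, indicator_of_mem hy]
    exact hf.dist_le_mul x hx y hy
  · rw [indicator_of_mem hx, indicator_of_notMem hy, Real.dist_0_eq_abs]
    exact abs_le_of_exit x hx y hy
  · rw [indicator_of_notMem hx, indicator_of_mem hy, dist_comm, Real.dist_0_eq_abs, dist_comm]
    exact abs_le_of_exit y hy x hx
  · rw [indicator_of_notMem hx, indicator_of_notMem hy, dist_self]
    positivity

lemma exists_lipschitzOnWith_of_continuousOn_fderiv {s : Set E} (hs : IsCompact s)
    (hconv : Convex ℝ s) {f : E → ℝ} (hdiff : ∀ x ∈ s, DifferentiableAt ℝ f x)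
    (hcont : ContinuousOn (fderiv ℝ f) s) : ∃ K, LipschitzOnWith K f s := by
  obtain ⟨C, hC⟩ := hs.exists_bound_of_continuousOn hcont
  exact ⟨C.toNNReal, hconv.lipschitzOnWith_of_nnnorm_fderiv_le hdiff fun x hx =>
    NNReal.coe_le_coe.1 ((hC x hx).trans (Real.le_coe_toNNReal C))⟩

end ExtensionByZero

section TruncatedExcess

variable {E : Type*} {s : Set E} {u w : E → ℝ} {x : E}

/-- The positive part of `u - w` on `s`, extended by zero outside `s`. Subtracting it from `u`
replaces `u` by `min u w` on `s`, which is the competitor used to compare a minimizer with a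
barrier `w`. -/
noncomputable def truncatedExcess (s : Set E) (u w : E → ℝ) : E → ℝ :=
  s.indicator fun x => max (u x - w x) 0

lemma truncatedExcess_nonneg (s : Set E) (u w : E → ℝ) (x : E) : 0 ≤ truncatedExcess s u w x :=
  indicator_nonneg (fun _ _ => le_max_right _ _) x

lemma truncatedExcess_of_le (h : u x ≤ w x) : truncatedExcess s u w x = 0 :=
  indicator_apply_eq_zero.2 fun _ => max_eq_right (sub_nonpos.2 h)

lemma le_of_truncatedExcess_eq_zero (hx : x ∈ s) (h : truncatedExcess s u w x = 0) :
    u x ≤ w x := by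
  rw [truncatedExcess, indicator_of_mem hx] at h
  exact sub_nonpos.1 (max_eq_right_iff.1 h)

section Topology

variable [TopologicalSpace E]

lemma truncatedExcess_of_notMem_interior (hbd : ∀ y ∈ frontier s, u y ≤ w y)
    (hx : x ∉ interior s) : truncatedExcess s u w x = 0 := by
  by_cases hxs : x ∈ s
  · exact truncatedExcess_of_le (hbd x ⟨subset_closure hxs, hx⟩)
  · exact indicator_of_notMem hxs _

lemma truncatedExcess_eventuallyEq_sub (hx : x ∈ interior s) (hu : ContinuousAt u x)
    (hw : ContinuousAt w x) (h : w x < u x) : truncatedExcess s u w =ᶠ[𝓝 x] u - w := by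
  filter_upwards [hw.eventually_lt hu h, isOpen_interior.mem_nhds hx] with y hy hys
  rw [truncatedExcess, indicator_of_mem (interior_subset hys), Pi.sub_apply]
  exact max_eq_left (sub_nonneg.2 hy.le)

lemma hasCompactSupport_truncatedExcess [R1Space E] (hs : IsCompact s) :
    HasCompactSupport (truncatedExcess s u w) :=
  HasCompactSupport.intro hs fun _ hx => indicator_of_notMem hx _

end Topology

variable [NormedAddCommGroup E] [NormedSpace ℝ E]

lemma lipschitzWith_truncatedExcess (hs : IsClosed s) (hbd : ∀ y ∈ frontier s, u y ≤ w y)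
    {K L : NNReal} (hu : LipschitzOnWith K u s) (hw : LipschitzOnWith L w s) :
    LipschitzWith (K + L) (truncatedExcess s u w) := by
  refine lipschitzWith_indicator_of_eq_zero_on_frontier hs ?_
    fun y hy => max_eq_right (sub_nonpos.2 (hbd y hy))
  simpa only [one_mul, Function.comp_def, id] using
    (LipschitzWith.id.max_const 0).comp_lipschitzOnWith (hu.sub hw)

lemma fderiv_truncatedExcess_of_eq_zero (h : truncatedExcess s u w x = 0) :
    fderiv ℝ (truncatedExcess s u w) x = 0 :=
  IsLocalMin.fderiv_eq_zero <| Eventually.of_forall fun y => by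
    rw [h]
    exact truncatedExcess_nonneg s u w y

end TruncatedExcess

section Divergence

variable {E : Type*} [NormedAddCommGroup E] [NormedSpace ℝ E] [FiniteDimensional ℝ E]
  [MeasurableSpace E] [BorelSpace E] {μ : Measure E} {φ : E → ℝ} {K : NNReal}

lemma integrable_fderiv_apply [IsFiniteMeasureOnCompacts μ] (hφ : LipschitzWith K φ)
    (hsupp : HasCompactSupport φ) {X : E → E} (hX : Continuous X) :
    Integrable (fun x => fderiv ℝ φ x (X x)) μ := by
  have hvanish : ∀ x ∉ tsupport φ, fderiv ℝ φ x (X x) = 0 := fun x hx => by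
    rw [Function.notMem_support.1 fun h => hx (support_fderiv_subset ℝ h), zero_apply]
  obtain ⟨C, hC⟩ := hsupp.isCompact.exists_bound_of_continuousOn hX.continuousOn
  refine (integrableOn_iff_integrable_of_support_subset (s := tsupport φ)
    fun x hx => by_contra fun h => hx (hvanish x h)).1 ?_
  refine Measure.integrableOn_of_bounded (M := K * C) hsupp.isCompact.measure_lt_top.ne ?_ ?_
  · exact (isBoundedBilinearMap_apply.continuous.measurable.comp
      ((measurable_fderiv ℝ φ).prodMk hX.measurable)).aestronglyMeasurable
  · filter_upwards [ae_restrict_mem hsupp.isCompact.measurableSet] with x hx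
    exact (fderiv ℝ φ x).le_of_opNorm_le_of_le (norm_fderiv_le_of_lipschitz ℝ hφ) (hC x hx)

variable [μ.IsAddHaarMeasure]

lemma integral_fderiv_apply_mul_clm (hφ : LipschitzWith K φ) (hsupp : HasCompactSupport φ)
    (L : E →L[ℝ] ℝ) (v z : E) :
    ∫ x, fderiv ℝ φ x v * L (x - z) ∂μ = -(L v * ∫ x, φ x ∂μ) := by
  have hL : ∀ x, lineDeriv ℝ (fun x => L (x - z)) x v = L v := fun x =>
    ((L.hasFDerivAt.comp x ((hasFDerivAt_id x).sub_const z)).hasLineDerivAt v).lineDeriv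
  have hLlip := L.lipschitz.comp ((LipschitzWith.id (α := E)).sub (LipschitzWith.const z))
  have hparts := LipschitzWith.integral_lineDeriv_mul_eq (μ := μ) hLlip hφ hsupp v
  calc ∫ x, fderiv ℝ φ x v * L (x - z) ∂μ
      = ∫ x, -(lineDeriv ℝ φ x (-v) * L (x - z)) ∂μ := by
        refine integral_congr_ae ?_
        filter_upwards [hφ.ae_differentiableAt (μ := μ)] with x hx
        rw [hx.lineDeriv_eq_fderiv, map_neg, neg_mul, neg_neg]
    _ = -∫ x, lineDeriv ℝ (fun x => L (x - z)) x v * φ x ∂μ := by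
        rw [integral_neg]
        exact congrArg Neg.neg hparts.symm
    _ = -(L v * ∫ x, φ x ∂μ) := by simp_rw [hL, integral_const_mul]

lemma integral_fderiv_apply_sub (hφ : LipschitzWith K φ) (hsupp : HasCompactSupport φ) (z : E) :
    ∫ x, fderiv ℝ φ x (x - z) ∂μ = -(Module.finrank ℝ E * ∫ x, φ x ∂μ) := by
  let b := Module.finBasis ℝ E
  let coord := fun i => LinearMap.toContinuousLinearMap (b.coord i)
  have hsum : ∀ x, fderiv ℝ φ x (x - z) = ∑ i, fderiv ℝ φ x (b i) * coord i (x - z) := fun x => by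
    conv_lhs => rw [← b.sum_repr (x - z), map_sum]
    exact Finset.sum_congr rfl fun i _ => by
      rw [map_smul, smul_eq_mul, mul_comm]
      rfl
  have hint : ∀ i, Integrable (fun x => fderiv ℝ φ x (b i) * coord i (x - z)) μ := fun i => by
    have hX : Continuous fun x => coord i (x - z) • b i := by fun_prop
    simpa only [map_smul, smul_eq_mul, mul_comm] using
      integrable_fderiv_apply (μ := μ) hφ hsupp hX
  have hcoord : ∀ i, coord i (b i) = 1 := fun i => by simp [coord]
  simp_rw [hsum, integral_finsetSum _ fun i _ => hint i,
    integral_fderiv_apply_mul_clm hφ hsupp, hcoord]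
  simp

lemma integral_fderiv_smul_sub_add_mul (hφ : LipschitzWith K φ) (hsupp : HasCompactSupport φ)
    (c m : ℝ) (z : E) :
    ∫ x, (fderiv ℝ φ x (c • (x - z)) + m * φ x) ∂μ =
      (m - c * Module.finrank ℝ E) * ∫ x, φ x ∂μ := by
  have hflux : Integrable (fun x => fderiv ℝ φ x (c • (x - z))) μ :=
    integrable_fderiv_apply hφ hsupp (by fun_prop)
  have hφint : Integrable φ μ := hφ.continuous.integrable_of_hasCompactSupport hsupp
  rw [integral_add hflux (hφint.const_mul m), integral_const_mul]
  simp_rw [map_smul, smul_eq_mul, integral_const_mul, integral_fderiv_apply_sub hφ hsupp]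
  ring

end Divergence

section Convexity

lemma rpow_add_mul_sub_le_rpow {γ M a b : ℝ} (hγ0 : 0 ≤ γ) (hγ1 : γ ≤ 1) (hb : 0 ≤ b)
    (hba : b < a) (haM : a ≤ M) : b ^ γ + γ * M ^ (γ - 1) * (a - b) ≤ a ^ γ := by
  have ha : 0 < a := hb.trans_lt hba
  have htangent : b ^ γ ≤ a ^ γ + γ * a ^ (γ - 1) * (b - a) := by
    have hbernoulli := rpow_one_add_le_one_add_mul_self (s := b / a - 1)
      (by linarith [div_nonneg hb ha.le]) hγ0 hγ1
    rw [add_sub_cancel, Real.div_rpow hb ha.le, div_le_iff₀ (by positivity)] at hbernoulli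
    refine hbernoulli.trans_eq ?_
    rw [Real.rpow_sub_one ha.ne']
    field_simp
  have hslope : γ * M ^ (γ - 1) * (a - b) ≤ γ * a ^ (γ - 1) * (a - b) := by
    have hM : M ^ (γ - 1) ≤ a ^ (γ - 1) := Real.rpow_le_rpow_of_nonpos ha haM (by linarith)
    exact mul_le_mul_of_nonneg_right (by gcongr) (sub_nonneg.2 hba.le)
  linarith

variable {E : Type*} [NormedAddCommGroup E] [InnerProductSpace ℝ E] {p q : ℝ}

-- Convexity of `‖·‖ ^ p / p` at the point `‖ξ‖ ^ (q - 2) • ξ`, where its gradient is `ξ`.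
lemma norm_rpow_div_add_inner_sub_le (hpq : p.HolderConjugate q) (a ξ : E) :
    ‖‖ξ‖ ^ (q - 2) • ξ‖ ^ p / p + inner ℝ (a - ‖ξ‖ ^ (q - 2) • ξ) ξ ≤ ‖a‖ ^ p / p := by
  have hq1 : 1 < q := hpq.symm.lt
  have hnorm : ‖‖ξ‖ ^ (q - 2) • ξ‖ = ‖ξ‖ ^ (q - 1) := by
    rw [norm_smul, Real.norm_of_nonneg (by positivity),
      ← Real.rpow_add_one' (by positivity) (by linarith)]
    ring_nf
  have hinner : inner ℝ (‖ξ‖ ^ (q - 2) • ξ) ξ = ‖ξ‖ ^ q := by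
    rw [real_inner_smul_left, real_inner_self_eq_norm_mul_norm, ← mul_assoc,
      ← Real.rpow_add_one' (by positivity) (by linarith),
      ← Real.rpow_add_one' (by positivity) (by linarith)]
    ring_nf
  have hsplit : ‖ξ‖ ^ q / p = ‖ξ‖ ^ q - ‖ξ‖ ^ q / q := by
    rw [div_eq_mul_inv, div_eq_mul_inv, ← hpq.symm.one_sub_inv]
    ring
  rw [hnorm, ← Real.rpow_mul (norm_nonneg ξ), hpq.symm.sub_one_mul_conj, inner_sub_left, hinner,
    hsplit]
  linarith [Real.young_inequality_of_nonneg (norm_nonneg a) (norm_nonneg ξ) hpq,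
    real_inner_le_norm a ξ]

end Convexity

section RadialBarrier

variable {E : Type*} [NormedAddCommGroup E] {q c : ℝ}

/-- The radial function about `z` with `|∇w| ^ (p - 2) ∇w = c (x - z)`, where `q` is the exponent
conjugate to `p`; its `p`-Laplacian is the constant `c` times the dimension. -/
noncomputable def radialBarrier (q c : ℝ) (z x : E) : ℝ :=
  c ^ (q - 1) / q * ‖x - z‖ ^ q

lemma radialBarrier_nonneg (hq : 0 ≤ q) (hc : 0 ≤ c) (z x : E) : 0 ≤ radialBarrier q c z x := by
  unfold radialBarrier
  positivity

lemma radialBarrier_self (hq : q ≠ 0) (z : E) : radialBarrier q c z z = 0 := by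
  rw [radialBarrier, sub_self, norm_zero, Real.zero_rpow hq, mul_zero]

lemma radialBarrier_of_mem_sphere {p M R : ℝ} (hpq : p.HolderConjugate q)
    (hM : 0 ≤ M) (hR : 0 < R) {z x : E} (hx : x ∈ sphere z R) :
    radialBarrier q ((q * M) ^ (p - 1) / R ^ p) z x = M := by
  have hq : 0 < q := hpq.symm.pos
  have hexp : (p - 1) * (q - 1) = 1 := by linarith [hpq.mul_eq_add]
  have hexp' : p * (q - 1) = q := by linarith [hpq.mul_eq_add]
  rw [radialBarrier, mem_sphere_iff_norm.1 hx, Real.div_rpow (by positivity) (by positivity),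
    ← Real.rpow_mul (by positivity), ← Real.rpow_mul hR.le, hexp, hexp', Real.rpow_one]
  field_simp

variable [InnerProductSpace ℝ E]

lemma contDiff_radialBarrier (hq : 1 < q) (z : E) : ContDiff ℝ 1 (radialBarrier q c z) :=
  contDiff_const.mul ((contDiff_norm_rpow hq).comp (contDiff_id.sub contDiff_const))

lemma hasGradientAt_radialBarrier [CompleteSpace E] (hq : 1 < q) (hc : 0 < c) (z x : E) :
    HasGradientAt (radialBarrier q c z) (‖c • (x - z)‖ ^ (q - 2) • c • (x - z)) x := by
  rw [hasGradientAt_iff_hasFDerivAt]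
  have hnorm := (hasFDerivAt_norm_rpow (x - z) hq).comp x ((hasFDerivAt_id x).sub_const z)
  refine (hnorm.const_mul (c ^ (q - 1) / q)).congr_fderiv ?_
  have hcoeff : c ^ (q - 1) = c ^ (q - 2) * c := by
    rw [← Real.rpow_add_one hc.ne']
    ring_nf
  ext y
  simp only [smul_apply, ContinuousLinearMap.comp_apply, InnerProductSpace.toDual_apply_apply,
    innerSL_apply_apply, ContinuousLinearMap.id_apply, real_inner_smul_left, smul_eq_mul,
    norm_smul, Real.norm_of_nonneg hc.le, Real.mul_rpow hc.le (norm_nonneg _), hcoeff]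
  field_simp

end RadialBarrier

section EnergyDensity

variable {E : Type*} [NormedAddCommGroup E] [InnerProductSpace ℝ E]

/-- The density `‖∇u‖ ^ p / p + F u` of the Alt–Phillips functional with potential `F`. -/
noncomputable def energyDensity [CompleteSpace E] (p : ℝ) (F : ℝ → ℝ) (u : E → ℝ) (x : E) : ℝ :=
  ‖gradient u x‖ ^ p / p + F (u x)

lemma integrableOn_energyDensity [FiniteDimensional ℝ E] [MeasurableSpace E] [BorelSpace E]
    {μ : Measure E} [IsFiniteMeasureOnCompacts μ] {p : ℝ} (hp : 0 ≤ p) {F : ℝ → ℝ}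
    (hF : Continuous F) {u : E → ℝ} {K : NNReal} {z : E} {R : ℝ}
    (hu : LipschitzOnWith K u (closedBall z R)) :
    IntegrableOn (energyDensity p F u) (ball z R) μ := by
  have hnorm : ∀ x, ‖gradient u x‖ = ‖fderiv ℝ u x‖ := fun x => by
    rw [← toDual_gradient, LinearIsometryEquiv.norm_map]
  have hgrad : IntegrableOn (fun x => ‖gradient u x‖ ^ p) (ball z R) μ := by
    simp_rw [hnorm]
    refine Measure.integrableOn_of_bounded (M := (K : ℝ) ^ p) measure_ball_lt_top.ne
      ((measurable_fderiv ℝ u).norm.pow_const p).aestronglyMeasurable ?_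
    filter_upwards [ae_restrict_mem measurableSet_ball] with x hx
    rw [Real.norm_of_nonneg (by positivity)]
    gcongr
    exact norm_fderiv_le_of_lipschitzOn ℝ
      (mem_of_superset (isOpen_ball.mem_nhds hx) ball_subset_closedBall) hu
  have hpot : IntegrableOn (fun x => F (u x)) (ball z R) μ :=
    ((hF.comp_continuousOn hu.continuousOn).integrableOn_compact
      (isCompact_closedBall z R)).mono_set ball_subset_closedBall
  exact (hgrad.div_const p).add hpot

variable [CompleteSpace E] {p q m M : ℝ} {F : ℝ → ℝ} {s : Set E} {u w : E → ℝ} {x ξ : E}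

-- `ξ` is the flux `‖∇w‖ ^ (p - 2) • ∇w` of the barrier.
lemma energyDensity_sub_truncatedExcess_add_le (hpq : p.HolderConjugate q)
    (hF : ∀ a b, 0 ≤ b → b < a → a ≤ M → F b + m * (a - b) ≤ F a)
    (hx : x ∈ interior s) (hu : DifferentiableAt ℝ u x) (huM : u x ≤ M) (hw0 : 0 ≤ w x)
    (hw : HasGradientAt w (‖ξ‖ ^ (q - 2) • ξ) x)
    (hφ : DifferentiableAt ℝ (truncatedExcess s u w) x) :
    energyDensity p F (u - truncatedExcess s u w) x +
      (fderiv ℝ (truncatedExcess s u w) x ξ + m * truncatedExcess s u w x) ≤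
        energyDensity p F u x := by
  rcases le_or_gt (u x) (w x) with hle | hlt
  · have hφ0 := truncatedExcess_of_le (s := s) hle
    have hgrad : gradient (u - truncatedExcess s u w) x = gradient u x := by
      rw [gradient, fderiv_sub hu hφ, fderiv_truncatedExcess_of_eq_zero hφ0, sub_zero, gradient]
    rw [energyDensity, hgrad, Pi.sub_apply, fderiv_truncatedExcess_of_eq_zero hφ0, hφ0]
    simp [energyDensity]
  · have hφ_eq := truncatedExcess_eventuallyEq_sub hx hu.continuousAt
      hw.differentiableAt.continuousAt hlt
    have hcompetitor : u - truncatedExcess s u w =ᶠ[𝓝 x] w := by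
      filter_upwards [hφ_eq] with y hy
      rw [Pi.sub_apply, hy, Pi.sub_apply, sub_sub_cancel]
    have hfderiv : fderiv ℝ (truncatedExcess s u w) x ξ =
        inner ℝ (gradient u x - ‖ξ‖ ^ (q - 2) • ξ) ξ := by
      rw [hφ_eq.fderiv_eq, fderiv_sub hu hw.differentiableAt, sub_apply, hw.fderiv_apply,
        hu.hasGradientAt.fderiv_apply, inner_sub_left]
    rw [energyDensity, hcompetitor.gradient_eq, hw.gradient, hcompetitor.self_of_nhds, hfderiv,
      hφ_eq.self_of_nhds, Pi.sub_apply, energyDensity]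
    linarith [norm_rpow_div_add_inner_sub_le hpq (gradient u x) ξ, hF _ _ hw0 hlt huM]

end EnergyDensity

section Porosity

variable {X : Type*} [PseudoMetricSpace X] {S : Set X} {y z : X} {r κ : ℝ}

lemma ball_subset_ball_diff_of_le_infDist (hy : y ∈ ball z (r / 2)) (hκr : κ ≤ r / 2)
    (hκ : κ ≤ infDist y S) : ball y κ ⊆ ball z r \ S := fun x hx =>
  ⟨by
    have hxy := mem_ball.1 hx
    have hyz := mem_ball.1 hy
    exact mem_ball.2 (by linarith [dist_triangle x y z]),
  fun hxS => ((mem_ball'.1 hx).trans_le hκ).not_ge (infDist_le_dist_of_mem hxS)⟩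

end Porosity

lemma exists_pos_mul_rpow_lt {A B s : ℝ} (hA : 0 ≤ A) (hB : 0 < B) (hs : s ≠ 0) :
    ∃ t, 0 < t ∧ A * t ^ s < B := by
  refine ⟨(B / (A + 1)) ^ s⁻¹, by positivity, ?_⟩
  rw [Real.rpow_inv_rpow (by positivity) hs, mul_div_assoc', div_lt_iff₀ (by positivity)]
  nlinarith

end Analysis

section Potential

variable {γ : ℝ} (lp lm : ℝ)

lemma continuous_Fgam (hγ : 0 ≤ γ) : Continuous (Fgam γ lp lm) :=
  (continuous_const.mul ((continuous_id.max continuous_const).rpow_const fun _ => Or.inr hγ)).add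
    (continuous_const.mul ((continuous_neg.max continuous_const).rpow_const fun _ => Or.inr hγ))

lemma Fgam_of_nonneg (hγ : γ ≠ 0) {t : ℝ} (ht : 0 ≤ t) : Fgam γ lp lm t = lp * t ^ γ := by
  rw [Fgam, max_eq_left ht, max_eq_right (neg_nonpos.2 ht), Real.zero_rpow hγ, mul_zero, add_zero]

lemma Fgam_neg (γ t : ℝ) : Fgam γ lp lm (-t) = Fgam γ lm lp t := by
  rw [Fgam, Fgam, neg_neg, add_comm]

lemma Fgam_add_mul_sub_le {lp : ℝ} (hlp : 0 ≤ lp) (hγ0 : 0 < γ) (hγ1 : γ ≤ 1) {M a b : ℝ}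
    (hb : 0 ≤ b) (hba : b < a) (haM : a ≤ M) :
    Fgam γ lp lm b + lp * γ * M ^ (γ - 1) * (a - b) ≤ Fgam γ lp lm a := by
  rw [Fgam_of_nonneg lp lm hγ0.ne' hb, Fgam_of_nonneg lp lm hγ0.ne' (hb.trans hba.le)]
  linarith [mul_le_mul_of_nonneg_left (rpow_add_mul_sub_le_rpow hγ0.le hγ1 hb hba haM) hlp]

end Potential

namespace APLocMin

variable {N : ℕ} {p : ℝ} {F : ℝ → ℝ} {Ω : Set (EuclideanSpace ℝ (Fin N))}
  {u : EuclideanSpace ℝ (Fin N) → ℝ} {z : EuclideanSpace ℝ (Fin N)} {R : ℝ}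

lemma neg (hu : APLocMin N p F Ω u) : APLocMin N p (fun t => F (-t)) Ω (-u) := by
  have gradient_neg : ∀ (f : EuclideanSpace ℝ (Fin N) → ℝ) x, gradient (-f) x = -gradient f x :=
    fun f x => by rw [gradient, fderiv_neg, map_neg, gradient]
  obtain ⟨hdiff, hcont, hint, hmin⟩ := hu
  refine ⟨fun x hx => (hdiff x hx).neg, ?_, ?_, fun z r hr hsub v K hv hvu => ?_⟩
  · simp_rw [gradient_neg]
    exact hcont.neg
  · simpa only [gradient_neg, norm_neg] using hint
  · have hvu' : EqOn (-v) u (sphere z r) := fun x hx => by simp [hvu hx]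
    simpa only [gradient_neg, norm_neg, Pi.neg_apply, neg_neg] using
      hmin z r hr hsub (-v) K hv.neg hvu'

lemma exists_lipschitzOnWith (hu : APLocMin N p F Ω u) (hsub : closedBall z R ⊆ Ω) :
    ∃ K, LipschitzOnWith K u (closedBall z R) := by
  refine exists_lipschitzOnWith_of_continuousOn_fderiv (isCompact_closedBall z R)
    (convex_closedBall z R) (fun x hx => hu.1 x (hsub hx)) ?_
  rw [← toDual_comp_gradient]
  exact (LinearIsometryEquiv.continuous _).comp_continuousOn (hu.2.1.mono hsub)

lemma setIntegral_nonpos_of_energyDensity_sub_add_le (hu : APLocMin N p F Ω u) (hp : 0 ≤ p)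
    (hF : Continuous F) (hR : 0 < R) (hsub : closedBall z R ⊆ Ω)
    {φ ψ : EuclideanSpace ℝ (Fin N) → ℝ} {K : NNReal} (hφ : LipschitzWith K φ)
    (hφ0 : ∀ x ∈ sphere z R, φ x = 0) (hψ : IntegrableOn ψ (ball z R))
    (hle : ∀ᵐ x ∂volume.restrict (ball z R),
      energyDensity p F (u - φ) x + ψ x ≤ energyDensity p F u x) :
    ∫ x in ball z R, ψ x ≤ 0 := by
  obtain ⟨L, hL⟩ := hu.exists_lipschitzOnWith hsub
  have hv : LipschitzOnWith (L + K) (u - φ) (closedBall z R) := hL.sub hφ.lipschitzOnWith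
  have hvint : IntegrableOn (energyDensity p F (u - φ)) (ball z R) :=
    integrableOn_energyDensity hp hF hv
  have hmin : ∫ x in ball z R, energyDensity p F u x ≤
      ∫ x in ball z R, energyDensity p F (u - φ) x := by
    rw [← closure_ball z hR.ne'] at hsub hv
    exact hu.2.2.2 z R hR hsub (u - φ) _ hv fun x hx => by rw [Pi.sub_apply, hφ0 x hx, sub_zero]
  have hmono := integral_mono_ae (hvint.add hψ) (integrableOn_energyDensity hp hF hL) hle
  rw [integral_add' hvint hψ] at hmono
  linarith

section Comparison

variable {q c m M : ℝ}

lemma exists_lipschitzWith_truncatedExcess (hu : APLocMin N p F Ω u) (hq : 1 < q) (hR : R ≠ 0)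
    (hsub : closedBall z R ⊆ Ω) (hbd : ∀ x ∈ sphere z R, u x ≤ radialBarrier q c z x) :
    ∃ K, LipschitzWith K (truncatedExcess (closedBall z R) u (radialBarrier q c z)) := by
  obtain ⟨K, hK⟩ := hu.exists_lipschitzOnWith hsub
  obtain ⟨L, hL⟩ := (contDiff_radialBarrier (c := c) hq z).locallyLipschitz
    |>.locallyLipschitzOn.exists_lipschitzOnWith_of_compact (isCompact_closedBall z R)
  exact ⟨K + L, lipschitzWith_truncatedExcess isClosed_closedBall
    (by rwa [frontier_closedBall z hR]) hK hL⟩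

lemma mul_integral_truncatedExcess_nonpos (hpq : p.HolderConjugate q) (hu : APLocMin N p F Ω u)
    (hF : Continuous F) (hFm : ∀ a b, 0 ≤ b → b < a → a ≤ M → F b + m * (a - b) ≤ F a)
    (hR : 0 < R) (hsub : closedBall z R ⊆ Ω) (hc : 0 < c) (huM : ∀ x ∈ closedBall z R, u x ≤ M)
    (hbd : ∀ x ∈ sphere z R, u x ≤ radialBarrier q c z x) :
    (m - c * N) * ∫ x, truncatedExcess (closedBall z R) u (radialBarrier q c z) x ≤ 0 := by
  set φ := truncatedExcess (closedBall z R) u (radialBarrier q c z)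
  obtain ⟨K, hφ⟩ := hu.exists_lipschitzWith_truncatedExcess hpq.symm.lt hR.ne' hsub hbd
  have hsupp : HasCompactSupport φ := hasCompactSupport_truncatedExcess (isCompact_closedBall z R)
  have hinterior : interior (closedBall z R) = ball z R := interior_closedBall z hR.ne'
  have hφ0 : ∀ x ∉ ball z R, φ x = 0 := fun x hx =>
    truncatedExcess_of_notMem_interior (by rwa [frontier_closedBall z hR.ne'])
      (by rwa [hinterior])
  have hint : Integrable fun x => fderiv ℝ φ x (c • (x - z)) + m * φ x :=
    (integrable_fderiv_apply hφ hsupp (by fun_prop)).add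
      ((hφ.continuous.integrable_of_hasCompactSupport hsupp).const_mul m)
  have hgain : ∀ᵐ x ∂volume.restrict (ball z R), energyDensity p F (u - φ) x +
      (fderiv ℝ φ x (c • (x - z)) + m * φ x) ≤ energyDensity p F u x := by
    filter_upwards [ae_restrict_mem measurableSet_ball,
      ae_restrict_of_ae (hφ.ae_differentiableAt (μ := volume))] with x hx hdx
    have hxR := ball_subset_closedBall hx
    exact energyDensity_sub_truncatedExcess_add_le hpq hFm (by rwa [hinterior])
      (hu.1 x (hsub hxR)) (huM x hxR) (radialBarrier_nonneg hpq.symm.nonneg hc.le z x)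
      (hasGradientAt_radialBarrier hpq.symm.lt hc z x) hdx
  have hvanish : ∀ x ∉ ball z R, fderiv ℝ φ x (c • (x - z)) + m * φ x = 0 := fun x hx => by
    rw [fderiv_truncatedExcess_of_eq_zero (hφ0 x hx), hφ0 x hx, mul_zero, add_zero, zero_apply]
  have hnonpos := hu.setIntegral_nonpos_of_energyDensity_sub_add_le hpq.nonneg hF hR hsub hφ
    (fun x hx => hφ0 x (sphere_disjoint_ball.notMem_of_mem_left hx)) hint.integrableOn hgain
  rwa [setIntegral_eq_integral_of_forall_compl_eq_zero hvanish,
    integral_fderiv_smul_sub_add_mul hφ hsupp, finrank_euclideanSpace_fin] at hnonpos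

theorem le_radialBarrier (hpq : p.HolderConjugate q) (hu : APLocMin N p F Ω u)
    (hF : Continuous F) (hFm : ∀ a b, 0 ≤ b → b < a → a ≤ M → F b + m * (a - b) ≤ F a)
    (hR : 0 < R) (hsub : closedBall z R ⊆ Ω) (hc : 0 < c) (hcm : c * N < m)
    (huM : ∀ x ∈ closedBall z R, u x ≤ M) (hbd : ∀ x ∈ sphere z R, u x ≤ radialBarrier q c z x) :
    ∀ x ∈ closedBall z R, u x ≤ radialBarrier q c z x := by
  intro x hx
  refine le_of_truncatedExcess_eq_zero hx (by_contra fun hφx => ?_)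
  obtain ⟨K, hφ⟩ := hu.exists_lipschitzWith_truncatedExcess hpq.symm.lt hR.ne' hsub hbd
  have hpos := hφ.continuous.integral_pos_of_hasCompactSupport_nonneg_nonzero (μ := volume)
    (hasCompactSupport_truncatedExcess (isCompact_closedBall z R)) (truncatedExcess_nonneg _ _ _)
    hφx
  exact (mul_pos (sub_pos.2 hcm) hpos).not_ge
    (hu.mul_integral_truncatedExcess_nonpos hpq hF hFm hR hsub hc huM hbd)

end Comparison

-- The barrier is the one of height `M` on `sphere z R`.
theorem nonpos_of_le_on_closedBall {q γ lp lm M : ℝ} (hpq : p.HolderConjugate q) (hγ0 : 0 < γ)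
    (hγ1 : γ ≤ 1) (hlp : 0 < lp) (hu : APLocMin N p (Fgam γ lp lm) Ω u) (hR : 0 < R)
    (hsub : closedBall z R ⊆ Ω) (hM : 0 < M)
    (hMR : N * q ^ (p - 1) * M ^ (p - γ) < lp * γ * R ^ p)
    (huM : ∀ x ∈ closedBall z R, u x ≤ M) : u z ≤ 0 := by
  have hq : 0 < q := hpq.symm.pos
  have hslope : (q * M) ^ (p - 1) / R ^ p * N < lp * γ * M ^ (γ - 1) := by
    have hsplit : M ^ (p - 1) = M ^ (p - γ) * M ^ (γ - 1) := by
      rw [← Real.rpow_add hM, sub_add_sub_cancel]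
    rw [Real.mul_rpow hq.le hM.le, hsplit, div_mul_eq_mul_div, div_lt_iff₀ (by positivity)]
    linarith [mul_lt_mul_of_pos_right hMR (Real.rpow_pos_of_pos hM (γ - 1))]
  have hbarrier := hu.le_radialBarrier hpq (continuous_Fgam lp lm hγ0.le)
    (fun _ _ => Fgam_add_mul_sub_le lm hlp.le hγ0 hγ1) hR hsub
    (div_pos (Real.rpow_pos_of_pos (mul_pos hq hM) _) (Real.rpow_pos_of_pos hR _)) hslope huM
    (fun x hx => by
      rw [radialBarrier_of_mem_sphere hpq hM.le hR hx]
      exact huM x (sphere_subset_closedBall hx))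
  exact (hbarrier z (mem_closedBall_self hR.le)).trans_eq (radialBarrier_self hq.ne' z)

end APLocMin

section Nondegeneracy

variable (N : ℕ) {p γ : ℝ}

theorem exists_nondegeneracy_const_of_pos_phase (hp : 1 < p) (hγ0 : 0 < γ) (hγ1 : γ ≤ 1)
    {lp : ℝ} (hlp : 0 < lp) (lm : ℝ) :
    ∃ c₀ : ℝ, 0 < c₀ ∧ ∀ (Ω : Set (EuclideanSpace ℝ (Fin N)))
      (u : EuclideanSpace ℝ (Fin N) → ℝ), APLocMin N p (Fgam γ lp lm) Ω u →
      ∀ z ∈ closure {x ∈ Ω | 0 < u x}, ∀ r : ℝ, 0 < r → ball z r ⊆ Ω →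
        ∃ y ∈ ball z r, c₀ * r ^ (1 + γ / (p - γ)) < u y := by
  have hpq := Real.HolderConjugate.conjExponent hp
  have hq := hpq.symm.pos
  have hpγ : 0 < p - γ := by linarith
  obtain ⟨c₀, hc₀, hsmall⟩ := exists_pos_mul_rpow_lt
    (A := N * p.conjExponent ^ (p - 1)) (B := lp * γ / 2 ^ p) (by positivity) (by positivity)
    hpγ.ne'
  refine ⟨c₀, hc₀, fun Ω u hu z hz r hr hsub => ?_⟩
  by_contra! hle
  have hheight : N * p.conjExponent ^ (p - 1) * (c₀ * r ^ (1 + γ / (p - γ))) ^ (p - γ) <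
      lp * γ * (r / 2) ^ p := by
    have hexp : (1 + γ / (p - γ)) * (p - γ) = p := by
      field_simp
      ring
    rw [Real.mul_rpow hc₀.le (by positivity), ← Real.rpow_mul hr.le, hexp, Real.div_rpow hr.le
      two_pos.le, ← mul_assoc, mul_div_left_comm, mul_comm (r ^ p)]
    exact mul_lt_mul_of_pos_right hsmall (by positivity)
  obtain ⟨x, hx, hxΩ, hux⟩ := mem_closure_iff.1 hz _ isOpen_ball (mem_ball_self (half_pos hr))
  have hball : closedBall x (r / 2) ⊆ ball z r := fun y hy => by
    rw [mem_ball] at hx ⊢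
    linarith [mem_closedBall.1 hy, dist_triangle y x z]
  exact hux.not_ge <| hu.nonpos_of_le_on_closedBall hpq hγ0 hγ1 hlp (half_pos hr)
    (hball.trans hsub) (by positivity) hheight fun y hy => hle y (hball hy)

theorem exists_nondegeneracy_const (hp : 1 < p) (hγ0 : 0 < γ) (hγ1 : γ ≤ 1) {lp lm : ℝ}
    (hlp : 0 < lp) (hlm : 0 < lm) :
    ∃ c₀ : ℝ, 0 < c₀ ∧ ∀ (Ω : Set (EuclideanSpace ℝ (Fin N)))
      (u : EuclideanSpace ℝ (Fin N) → ℝ), APLocMin N p (Fgam γ lp lm) Ω u →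
      ∀ z ∈ apFB N Ω u, ∀ r : ℝ, 0 < r → ball z r ⊆ Ω →
        ∃ y ∈ ball z r, c₀ * r ^ (1 + γ / (p - γ)) < |u y| := by
  obtain ⟨cp, hcp, hpos⟩ := exists_nondegeneracy_const_of_pos_phase N hp hγ0 hγ1 hlp lm
  obtain ⟨cm, hcm, hneg⟩ := exists_nondegeneracy_const_of_pos_phase N hp hγ0 hγ1 hlm lp
  refine ⟨min cp cm, lt_min hcp hcm, fun Ω u hu z hz r hr hsub => ?_⟩
  rcases hz.1 with hz | hz
  · obtain ⟨y, hy, huy⟩ := hpos Ω u hu z (frontier_subset_closure hz) r hr hsub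
    refine ⟨y, hy, lt_of_le_of_lt ?_ (huy.trans_le (le_abs_self _))⟩
    gcongr
    exact min_le_left _ _
  · have hu_neg : APLocMin N p (Fgam γ lm lp) Ω (-u) := by simpa only [Fgam_neg] using hu.neg
    obtain ⟨y, hy, huy⟩ := hneg Ω (-u) hu_neg z
      (by simpa only [Pi.neg_apply, neg_pos] using frontier_subset_closure hz) r hr hsub
    refine ⟨y, hy, lt_of_le_of_lt ?_ (huy.trans_le (neg_le_abs _))⟩
    gcongr
    exact min_le_right _ _

end Nondegeneracy

theorem stmt14_general (N : ℕ) {p γ lp lm C : ℝ} (hp : 1 < p) (hγ0 : 0 < γ) (hγ1 : γ ≤ 1)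
    (hlp : 0 < lp) (hlm : 0 < lm) (hC : 0 ≤ C) :
    ∃ κ : ℝ, κ ∈ Ioo (0 : ℝ) 1 ∧
      ∀ (Ω : Set (EuclideanSpace ℝ (Fin N))) (u : EuclideanSpace ℝ (Fin N) → ℝ),
      APLocMin N p (Fgam γ lp lm) Ω u →
      ∀ S ⊆ apFB N Ω u, ∀ ρ₀ : ℝ,
        (∀ x ∈ Ω, infDist x S < ρ₀ → |u x| ≤ C * infDist x S ^ (1 + γ / (p - γ))) →
      ∀ z ∈ S, ∀ r : ℝ, 0 < r → r ≤ ρ₀ → ball z r ⊆ Ω →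
        ∃ y ∈ ball z r, ball y (κ * r) ⊆ ball z r \ S := by
  obtain ⟨c₀, hc₀, hnondeg⟩ := exists_nondegeneracy_const N hp hγ0 hγ1 hlp hlm
  have hβ : 0 < 1 + γ / (p - γ) := add_pos one_pos (div_pos hγ0 (by linarith))
  set β := 1 + γ / (p - γ)
  obtain ⟨t, ht, hCt⟩ := exists_pos_mul_rpow_lt hC hc₀ hβ.ne'
  refine ⟨min (1 / 2) (t / 2), ⟨by positivity, by linarith [min_le_left (1 / 2) (t / 2)]⟩,
    fun Ω u hu S hS ρ₀ hgrowth z hz r hr hrρ hsub => ?_⟩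
  have hhalf : ball z (r / 2) ⊆ ball z r := ball_subset_ball (half_le_self hr.le)
  obtain ⟨y, hy, huy⟩ := hnondeg Ω u hu z (hS hz) (r / 2) (half_pos hr) (hhalf.trans hsub)
  have hdist : infDist y S < ρ₀ :=
    (infDist_le_dist_of_mem hz).trans_lt ((mem_ball.1 (hhalf hy)).trans_le hrρ)
  have hfar : t * (r / 2) < infDist y S := by
    refine (Real.rpow_lt_rpow_iff (by positivity) infDist_nonneg hβ).1 ?_
    refine lt_of_mul_lt_mul_left ?_ hC
    calc C * (t * (r / 2)) ^ β = C * t ^ β * (r / 2) ^ β := by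
          rw [Real.mul_rpow ht.le (half_pos hr).le, mul_assoc]
      _ ≤ c₀ * (r / 2) ^ β := by gcongr
      _ < |u y| := huy
      _ ≤ C * infDist y S ^ β := hgrowth y (hsub (hhalf hy)) hdist
  refine ⟨y, hhalf hy, ball_subset_ball_diff_of_le_infDist hy ?_ (le_trans ?_ hfar.le)⟩
  · linarith [mul_le_mul_of_nonneg_right (min_le_left (1 / 2) (t / 2)) hr.le]
  · linarith [mul_le_mul_of_nonneg_right (min_le_right (1 / 2) (t / 2)) hr.le]

/-- Local porosity of the zero-gradient free boundary `Γ₀(u)`, assuming the optimal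
growth property with constant `C₂`. -/
theorem stmt14 (N : ℕ) (hN : 1 ≤ N) (p γ lp lm C₂ : ℝ)
    (hp : 1 < p) (hγ0 : 0 < γ) (hγ1 : γ ≤ 1) (hγp : γ < p)
    (hlp : 0 < lp) (hlm : 0 < lm) (hC₂ : 0 < C₂) :
    ∃ κ : ℝ, κ ∈ Set.Ioo (0 : ℝ) 1 ∧
      ∀ (Ω : Set (EuclideanSpace ℝ (Fin N))), IsOpen Ω → Bornology.IsBounded Ω →
      ∀ u : EuclideanSpace ℝ (Fin N) → ℝ, APLocMin N p (Fgam γ lp lm) Ω u →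
      ∀ Ω' : Set (EuclideanSpace ℝ (Fin N)), Ω' ⊆ Ω →
      ∀ d : ℝ, 0 < d → (∀ x ∈ Ω', d ≤ Metric.infDist x (frontier Ω)) →
      ∀ ρ₀ : ℝ, 0 < ρ₀ →
        (∀ x ∈ Ω, Metric.infDist x (apFB0 N Ω u) < ρ₀ →
          |u x| ≤ C₂ * Metric.infDist x (apFB0 N Ω u) ^ (1 + γ / (p - γ))) →
      ∀ z ∈ apFB0 N Ω u ∩ Ω', ∀ r : ℝ, 0 < r → r < min ρ₀ d →
        ∃ y ∈ Metric.ball z r,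
          Metric.ball y (κ * r) ⊆ Metric.ball z r \ apFB0 N Ω u := by
  obtain ⟨κ, hκ, hporous⟩ := stmt14_general N hp hγ0 hγ1 hlp hlm hC₂.le
  exact ⟨κ, hκ, fun Ω _ _ u hu Ω' hΩ' d _ hd ρ₀ _ hgrowth z hz r hr hrlt =>
    hporous Ω u hu _ inter_subset_left ρ₀ hgrowth z hz.1 r hr (lt_min_iff.1 hrlt).1.le
      (ball_subset_of_le_infDist_frontier (hΩ' hz.2)
        ((lt_min_iff.1 hrlt).2.le.trans (hd z hz.2)))⟩
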